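/- arXiv:2301.07167 — 3 statements merged into one kernel-verified Lean document; each statement's English description precedes it below -/
import Mathlib

section
/- Let E = EuclideanSpace ℝ n and let q : E → E → ℂ be a symmetric bilinear form (q(x,y) = q(y,x)). Let F : E → ℂ be differentiable and suppose fderiv ℝ F x g = -i·q(x,g)·F(x) for all x, g ∈ E. Then F(x) = F(0)·exp(-(i/2)·q(x,x)) for all x ∈ E. -/
/-!
On the line `t ↦ t • x` the condition on `F` is the linear ordinary differential equation
`f' = φ' • f` with `φ t = -(i/2) q (t • x) (t • x)`, because
`q (t • x) x + q x (t • x) = 2 q (t • x) x`. Hence `exp (-φ) • f` is constant, and comparing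
`t = 0` with `t = 1` gives the Gaussian.
-/

open Complex (exp I)

section Line

variable {𝕜 : Type*} [NontriviallyNormedField 𝕜] {E : Type*} [AddCommGroup E] [Module 𝕜 E]
  {V : Type*} [NormedAddCommGroup V] [NormedSpace 𝕜 V]

theorem hasLineDerivAt_add_smul_iff {f : E → V} {f' : V} {x v : E} {t : 𝕜} :
    HasLineDerivAt 𝕜 f f' (x + t • v) v ↔ HasDerivAt (fun s : 𝕜 ↦ f (x + s • v)) f' t := by
  refine ⟨fun h ↦ ?_, fun h ↦ ?_⟩
  · have hshift : HasDerivAt (fun s : 𝕜 ↦ f (x + t • v + s • v)) f' (t + -t) := by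
      rwa [add_neg_cancel]
    simpa [add_assoc, ← add_smul] using hshift.comp_add_const t (-t)
  · have hshift : HasDerivAt (fun s : 𝕜 ↦ f (x + s • v)) f' (t + 0) := by rwa [add_zero]
    simpa [HasLineDerivAt, add_assoc, add_smul] using hshift.comp_const_add t 0

theorem hasLineDerivAt_apply_self (B : E →ₗ[𝕜] E →ₗ[𝕜] V) (x v : E) :
    HasLineDerivAt 𝕜 (fun y ↦ B y y) (B x v + B v x) x v :=
  LinearMap.BilinMap.polar_toQuadraticMap (B := B) x v ▸
    (LinearMap.BilinMap.toQuadraticMap B).hasLineDerivAt x v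

end Line

section IntegratingFactor

variable {𝕜 : Type*} [RCLike 𝕜] [NormedAlgebra 𝕜 ℂ]
  {V : Type*} [NormedAddCommGroup V] [NormedSpace ℂ V] [NormedSpace 𝕜 V] [IsScalarTower 𝕜 ℂ V]

theorem eq_cexp_sub_smul_of_hasDerivAt {φ φ' : 𝕜 → ℂ} {f : 𝕜 → V}
    (hφ : ∀ t, HasDerivAt φ (φ' t) t) (hf : ∀ t, HasDerivAt f (φ' t • f t) t) (s t : 𝕜) :
    f t = exp (φ t - φ s) • f s := by
  have hconst (r : 𝕜) : HasDerivAt (fun r ↦ exp (-φ r) • f r) 0 r := by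
    refine ((hφ r).neg.cexp.smul (hf r)).congr_deriv ?_
    module
  have heq : exp (-φ t) • f t = exp (-φ s) • f s :=
    is_const_of_deriv_eq_zero (fun r ↦ (hconst r).differentiableAt) (fun r ↦ (hconst r).deriv) t s
  calc
    f t = exp (φ t) • exp (-φ t) • f t := by
      rw [smul_smul, ← Complex.exp_add, add_neg_cancel, Complex.exp_zero, one_smul]
    _ = exp (φ t - φ s) • f s := by
      rw [heq, smul_smul, ← Complex.exp_add, ← sub_eq_add_neg]

theorem eq_cexp_sub_smul_of_hasLineDerivAt {E : Type*} [AddCommGroup E] [Module 𝕜 E]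
    {φ : E → ℂ} {φ' : 𝕜 → ℂ} {F : E → V} {x v : E}
    (hφ : ∀ t : 𝕜, HasLineDerivAt 𝕜 φ (φ' t) (x + t • v) v)
    (hF : ∀ t : 𝕜, HasLineDerivAt 𝕜 F (φ' t • F (x + t • v)) (x + t • v) v) :
    F (x + v) = exp (φ (x + v) - φ x) • F x := by
  simpa using eq_cexp_sub_smul_of_hasDerivAt
    (fun t ↦ hasLineDerivAt_add_smul_iff.1 (hφ t)) (fun t ↦ hasLineDerivAt_add_smul_iff.1 (hF t))
    0 1

end IntegratingFactor

theorem hasLineDerivAt_neg_I_div_two_mul_apply_self_radial {E : Type*} [AddCommGroup E] [Module ℝ E]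
    (q : E →ₗ[ℝ] E →ₗ[ℝ] ℂ) (t : ℝ) (x : E) :
    HasLineDerivAt ℝ (fun y ↦ -(I / 2) * q y y) (-I * q (t • x) x) (t • x) x := by
  have hderiv : -(I / 2) * (q (t • x) x + q x (t • x)) = -I * q (t • x) x := by
    simp only [map_smul, LinearMap.smul_apply]
    ring
  exact hderiv ▸ HasDerivAt.const_mul (-(I / 2)) (hasLineDerivAt_apply_self q (t • x) x)

theorem annihilated_is_gaussian_general {E : Type*} [AddCommGroup E] [Module ℝ E]
    {V : Type*} [NormedAddCommGroup V] [NormedSpace ℂ V]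
    (q : E →ₗ[ℝ] E →ₗ[ℝ] ℂ) (F : E → V) (x : E)
    (hF : ∀ t : ℝ, HasLineDerivAt ℝ F ((-I * q (t • x) x) • F (t • x)) (t • x) x) :
    F x = exp (-(I / 2) * q x x) • F 0 := by
  have hφ (t : ℝ) : HasLineDerivAt ℝ (fun y ↦ -(I / 2) * q y y) (-I * q (t • x) x) (0 + t • x) x :=
    (zero_add (t • x)).symm ▸ hasLineDerivAt_neg_I_div_two_mul_apply_self_radial q t x
  simpa using eq_cexp_sub_smul_of_hasLineDerivAt hφ fun t ↦ (zero_add (t • x)).symm ▸ hF t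

/-- Converse of the paper's equation (sha): any differentiable `F` satisfying
`∂_g F(x) = -i·q(x,g)·F(x)` for a symmetric bilinear form `q` and all directions `g`
must be the Gaussian `F(x) = F(0)·exp(-(i/2)·q(x,x))`. -/
theorem annihilated_is_gaussian {n : ℕ}
    (q : EuclideanSpace ℝ (Fin n) →ₗ[ℝ] EuclideanSpace ℝ (Fin n) →ₗ[ℝ] ℂ)
    (hq : ∀ x y, q x y = q y x)
    (F : EuclideanSpace ℝ (Fin n) → ℂ) (hF : Differentiable ℝ F)
    (hFeq : ∀ x g, fderiv ℝ F x g = -Complex.I * q x g * F x) :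
    ∀ x, F x = F 0 * Complex.exp (-(Complex.I / 2) * q x x) := by
  intro x
  rw [mul_comm, ← smul_eq_mul]
  refine annihilated_is_gaussian_general q F x fun t ↦ ?_
  simpa only [hFeq, smul_eq_mul] using (hF (t • x)).hasFDerivAt.hasLineDerivAt x
end

section
/- Let E = EuclideanSpace ℝ n and let r : E → E → ℂ be a symmetric bilinear form (r(x,y) = r(y,x)). Let c ∈ ℂ and define the vacuum Ψ₀ : E → ℂ by Ψ₀(x) = c·exp(-r(x,x)). Then Ψ₀ is differentiable and for all x, u ∈ E: fderiv ℝ Ψ₀ x u + 2·r(x,u)·Ψ₀(x) = 0; consequently, for any w ∈ ℂ and u ∈ E, the annihilation operator value (i/2)·w·(fderiv ℝ Ψ₀ x u + 2·r(x,u)·Ψ₀(x)) vanishes for all x. -/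
section Diagonal

variable {𝕜 E F : Type*} [NontriviallyNormedField 𝕜] [NormedAddCommGroup E] [NormedSpace 𝕜 E]
  [NormedAddCommGroup F] [NormedSpace 𝕜 F]

theorem hasFDerivAt_bilinear_diagonal (B : E →L[𝕜] E →L[𝕜] F) (x : E) :
    HasFDerivAt (fun y ↦ B y y) (B x + B.flip x) x :=
  B.hasFDerivAt_of_bilinear (hasFDerivAt_id x) (hasFDerivAt_id x)

end Diagonal

section Vacuum

variable {𝕜 E : Type*} [NontriviallyNormedField 𝕜] [NormedAlgebra 𝕜 ℂ] [NormedAddCommGroup E]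
  [NormedSpace 𝕜 E]

/-- The Gaussian vacuum wave function `Ψ₀` with normalization `c`. The form `r` stands for the
paper's kernel `B⁻¹`, and the exponent carries no factor `1 / 2`. -/
noncomputable def gaussianVacuum (r : E →L[𝕜] E →L[𝕜] ℂ) (c : ℂ) (x : E) : ℂ :=
  c * Complex.exp (-r x x)

/-- The modified annihilation operator `b_Gauss`, acting on wave functions `Ψ`. The scalar `w`
stands for the paper's smearing factor `Ag + Bh + ig`, and the derivative in direction `u` for the
functional derivative. -/
noncomputable def annihilationOp (r : E →L[𝕜] E →L[𝕜] ℂ) (w : ℂ) (u : E) (Ψ : E → ℂ) (x : E) : ℂ :=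
  Complex.I / 2 * w * (fderiv 𝕜 Ψ x u + 2 * r x u * Ψ x)

theorem hasFDerivAt_gaussianVacuum (r : E →L[𝕜] E →L[𝕜] ℂ) (c : ℂ) (x : E) :
    HasFDerivAt (gaussianVacuum r c) (-gaussianVacuum r c x • (r x + r.flip x)) x := by
  have h := (hasFDerivAt_bilinear_diagonal r x).fun_neg.cexp.const_mul c
  rwa [smul_smul, smul_neg, ← neg_smul] at h

theorem differentiable_gaussianVacuum (r : E →L[𝕜] E →L[𝕜] ℂ) (c : ℂ) :
    Differentiable 𝕜 (gaussianVacuum r c) :=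
  fun x ↦ (hasFDerivAt_gaussianVacuum r c x).differentiableAt

theorem fderiv_gaussianVacuum_apply (r : E →L[𝕜] E →L[𝕜] ℂ) (c : ℂ) (x u : E) :
    fderiv 𝕜 (gaussianVacuum r c) x u = -gaussianVacuum r c x * (r x u + r u x) := by
  rw [(hasFDerivAt_gaussianVacuum r c x).fderiv]
  rfl

theorem fderiv_gaussianVacuum_add_eq_zero {r : E →L[𝕜] E →L[𝕜] ℂ} (hr : ∀ x y, r x y = r y x)
    (c : ℂ) (x u : E) :
    fderiv 𝕜 (gaussianVacuum r c) x u + 2 * r x u * gaussianVacuum r c x = 0 := by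
  rw [fderiv_gaussianVacuum_apply, hr u x]
  ring

theorem annihilationOp_gaussianVacuum {r : E →L[𝕜] E →L[𝕜] ℂ} (hr : ∀ x y, r x y = r y x)
    (c w : ℂ) (u x : E) : annihilationOp r w u (gaussianVacuum r c) x = 0 := by
  rw [annihilationOp, fderiv_gaussianVacuum_add_eq_zero hr, mul_zero]

theorem vacuum_annihilated_general {r : E →L[𝕜] E →L[𝕜] ℂ} (hr : ∀ x y, r x y = r y x) (c : ℂ) :
    Differentiable 𝕜 (gaussianVacuum r c) ∧
      (∀ x u, fderiv 𝕜 (gaussianVacuum r c) x u + 2 * r x u * gaussianVacuum r c x = 0) ∧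
      (∀ (w : ℂ) (u x : E), annihilationOp r w u (gaussianVacuum r c) x = 0) :=
  ⟨differentiable_gaussianVacuum r c, fderiv_gaussianVacuum_add_eq_zero hr c,
    annihilationOp_gaussianVacuum hr c⟩

end Vacuum

/-- Finite-dimensional analogue of the paper's main claim: the Gaussian vacuum
`Ψ₀(x) = c·exp(-r(x,x))` built from a symmetric bilinear form `r` is differentiable,
satisfies `∂_u Ψ₀(x) + 2·r(x,u)·Ψ₀(x) = 0`, and hence is annihilated by the modified
annihilation operator `(i/2)·w·(∂_u + 2·r(·,u))`. -/
theorem vacuum_annihilated {n : ℕ}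
    (r : EuclideanSpace ℝ (Fin n) →ₗ[ℝ] EuclideanSpace ℝ (Fin n) →ₗ[ℝ] ℂ)
    (hr : ∀ x y, r x y = r y x) (c : ℂ)
    (Ψ₀ : EuclideanSpace ℝ (Fin n) → ℂ)
    (hΨ₀ : ∀ x, Ψ₀ x = c * Complex.exp (-r x x)) :
    Differentiable ℝ Ψ₀ ∧
      (∀ x u, fderiv ℝ Ψ₀ x u + 2 * r x u * Ψ₀ x = 0) ∧
      (∀ (w : ℂ) (u x : EuclideanSpace ℝ (Fin n)),
        Complex.I / 2 * w * (fderiv ℝ Ψ₀ x u + 2 * r x u * Ψ₀ x) = 0) := by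
  obtain rfl : Ψ₀ = gaussianVacuum r.toContinuousBilinearMap c := funext hΨ₀
  exact vacuum_annihilated_general (r := r.toContinuousBilinearMap) hr c
end

section
/- Let V be a complex vector space with a nondegenerate symmetric bilinear form ⟨·,·⟩ : V → V → ℂ. Let A, C, D, M : V →ₗ[ℂ] V be linear maps and B : V ≃ₗ[ℂ] V, and assume the symmetry relations ⟨u, B v⟩ = ⟨v, B u⟩, ⟨u, C v⟩ = ⟨v, C u⟩, and ⟨h, A g⟩ = -⟨g, D h⟩ for all u, v, g, h ∈ V. Then the identity (i/2)·⟨g, M g⟩ - (1/4)·(⟨h, B h⟩ - 2·⟨h, B(M g)⟩ + ⟨M g, B(M g)⟩) = (i/2)·⟨h, g⟩ - (1/4)·(⟨h, A g⟩ + ⟨h, B h⟩ - ⟨g, C g⟩ - ⟨g, D h⟩) holds for all g, h ∈ V if and only if both: (1) B ∘ M = i•id - A, and (2) ⟨g, C g⟩ = 2i·⟨g, M g⟩ - ⟨M g, B(M g)⟩ for all g ∈ V. -/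
/-!
The terms quadratic in `h` agree on the two sides of the exponent-matching equation, and the
relation between `A` and `D` merges the mixed terms, so the difference of the sides is affine
in `h`. An affine function vanishes identically only if its linear and constant parts do: the
constant part gives the relation for `C`, and nondegeneracy turns the vanishing of the linear part
into `B ∘ M = i - A`.
-/

section LinearAlgebra

lemma forall_linearMap_apply_eq_const_iff {R V W : Type*} [Semiring R] [AddCommMonoid V]
    [Module R V] [AddCommMonoid W] [Module R W] (f : V →ₗ[R] W) (w : W) :
    (∀ v, f v = w) ↔ (∀ v, f v = 0) ∧ w = 0 := by
  constructor
  · intro constant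
    have const_zero : w = 0 := by rw [← constant 0, map_zero]
    exact ⟨fun v => (constant v).trans const_zero, const_zero⟩
  · rintro ⟨linear_zero, const_zero⟩ v
    rw [linear_zero, const_zero]

lemma forall_pairing_eq_iff_of_separatingRight {R U V W P : Type*} [CommRing R] [AddCommGroup U]
    [Module R U] [AddCommGroup V] [Module R V] [AddCommMonoid W] [Module R W] [AddCommGroup P]
    [Module R P] {b : U →ₗ[R] V →ₗ[R] P} (hb : b.SeparatingRight) (S T : W →ₗ[R] V) :
    (∀ w u, b u (S w) = b u (T w)) ↔ S = T := by
  constructor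
  · intro pairing_eq
    ext w
    refine sub_eq_zero.mp (hb _ fun u => ?_)
    rw [map_sub, pairing_eq, sub_self]
  · rintro rfl _ _
    rfl

end LinearAlgebra

section ExponentMatching

variable {K V : Type*} [Field K] [AddCommGroup V] [Module K V]

/-- The side of the exponent-matching equation that comes from the Schrödinger representation, with
`M` the multiplication part of the momentum operator. The scalar `c` stands for the imaginary
unit. -/
def schrodingerExponent (inn : V →ₗ[K] V →ₗ[K] K) (c : K) (B M : V →ₗ[K] V) (g h : V) : K :=
  c / 2 * inn g (M g) -
    (1 / 4 : K) * (inn h (B h) - 2 * inn h (B (M g)) + inn (M g) (B (M g)))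

/-- The side of the exponent-matching equation that comes from the Fock representation, with
`A`, `B`, `C`, `D` the components of `-J = [[A, B], [C, D]]` for the complex structure `J`. The
scalar `c` stands for the imaginary unit. -/
def fockExponent (inn : V →ₗ[K] V →ₗ[K] K) (c : K) (A B C D : V →ₗ[K] V) (g h : V) : K :=
  c / 2 * inn h g -
    (1 / 4 : K) * (inn h (A g) + inn h (B h) - inn g (C g) - inn g (D h))

variable [NeZero (2 : K)] {inn : V →ₗ[K] V →ₗ[K] K} {A D : V →ₗ[K] V}

lemma schrodingerExponent_sub_fockExponent
    (hAD : ∀ h g : V, inn h (A g) = -inn g (D h)) (c : K) (B C M : V →ₗ[K] V) (g h : V) :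
    schrodingerExponent inn c B M g h - fockExponent inn c A B C D g h =
      (2 * inn h (B (M g) - (c • g - A g)) -
        (inn g (C g) - (2 * c * inn g (M g) - inn (M g) (B (M g))))) / 4 := by
  have two_ne : (2 : K) ≠ 0 := two_ne_zero
  have four_eq : (4 : K) = 2 * 2 := by norm_num
  have mixed_terms : inn g (D h) = -inn h (A g) := by rw [hAD, neg_neg]
  simp only [schrodingerExponent, fockExponent, mixed_terms, four_eq, map_sub, map_smul,
    smul_eq_mul]
  field_simp
  ring

lemma forall_schrodingerExponent_eq_fockExponent_iff
    (hAD : ∀ h g : V, inn h (A g) = -inn g (D h)) (c : K) (B C M : V →ₗ[K] V) (g : V) :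
    (∀ h, schrodingerExponent inn c B M g h = fockExponent inn c A B C D g h) ↔
      (∀ h, inn h (B (M g)) = inn h (c • g - A g)) ∧
        inn g (C g) = 2 * c * inn g (M g) - inn (M g) (B (M g)) := by
  have two_ne : (2 : K) ≠ 0 := two_ne_zero
  have four_ne : (4 : K) ≠ 0 := by
    rw [← two_add_two_eq_four, ← two_mul]
    exact mul_ne_zero two_ne two_ne
  let linearPart : V →ₗ[K] K := (2 : K) • inn.flip (B (M g) - (c • g - A g))
  let constantPart : K := inn g (C g) - (2 * c * inn g (M g) - inn (M g) (B (M g)))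
  have linearPart_eq_zero_iff (h : V) :
      linearPart h = 0 ↔ inn h (B (M g)) = inn h (c • g - A g) := by
    rw [LinearMap.smul_apply, smul_eq_zero_iff_right two_ne, LinearMap.flip_apply, map_sub,
      sub_eq_zero]
  calc
    (∀ h, schrodingerExponent inn c B M g h = fockExponent inn c A B C D g h)
        ↔ ∀ h, linearPart h = constantPart := forall_congr' fun h => by
      rw [← sub_eq_zero, schrodingerExponent_sub_fockExponent hAD, div_eq_zero_iff,
        or_iff_left four_ne, sub_eq_zero]
      rfl
    _ ↔ (∀ h, linearPart h = 0) ∧ constantPart = 0 := forall_linearMap_apply_eq_const_iff _ _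
    _ ↔ _ := and_congr (forall_congr' linearPart_eq_zero_iff) sub_eq_zero

theorem exponent_matching_general (hinn : inn.SeparatingRight)
    (hAD : ∀ h g : V, inn h (A g) = -inn g (D h)) (c : K) (B C M : V →ₗ[K] V) :
    (∀ g h, schrodingerExponent inn c B M g h = fockExponent inn c A B C D g h) ↔
      B ∘ₗ M = c • LinearMap.id - A ∧
        ∀ g, inn g (C g) = 2 * c * inn g (M g) - inn (M g) (B (M g)) := by
  simp only [forall_schrodingerExponent_eq_fockExponent_iff hAD, forall_and]
  exact and_congr_left'
    (forall_pairing_eq_iff_of_separatingRight hinn (B ∘ₗ M) (c • LinearMap.id - A))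

end ExponentMatching

/-- The exponent-matching equation (ot) of the paper: given the symmetry relations
(consistency2) and a nondegenerate symmetric bilinear form, the identity
`(i/2)⟨g,Mg⟩ - (1/4)(⟨h,Bh⟩ - 2⟨h,B(Mg)⟩ + ⟨Mg,B(Mg)⟩)
  = (i/2)⟨h,g⟩ - (1/4)(⟨h,Ag⟩ + ⟨h,Bh⟩ - ⟨g,Cg⟩ - ⟨g,Dh⟩)`
holds for all `g, h` if and only if `B∘M = i·id - A` and
`⟨g,Cg⟩ = 2i⟨g,Mg⟩ - ⟨Mg,B(Mg)⟩` for all `g` (relations (consistency3)). -/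
theorem exponent_matching {V : Type*} [AddCommGroup V] [Module ℂ V]
    (inn : V →ₗ[ℂ] V →ₗ[ℂ] ℂ)
    (hsymm : ∀ u v : V, inn u v = inn v u)
    (hnd : ∀ v : V, (∀ h : V, inn h v = 0) → v = 0)
    (A C D M : V →ₗ[ℂ] V) (B : V ≃ₗ[ℂ] V)
    (hB : ∀ u v : V, inn u (B v) = inn v (B u))
    (hC : ∀ u v : V, inn u (C v) = inn v (C u))
    (hAD : ∀ h g : V, inn h (A g) = -inn g (D h)) :
    (∀ g h : V,
        Complex.I / 2 * inn g (M g) -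
          (1 / 4 : ℂ) * (inn h (B h) - 2 * inn h (B (M g)) + inn (M g) (B (M g))) =
        Complex.I / 2 * inn h g -
          (1 / 4 : ℂ) * (inn h (A g) + inn h (B h) - inn g (C g) - inn g (D h))) ↔
      ((B : V →ₗ[ℂ] V) ∘ₗ M = Complex.I • LinearMap.id - A ∧
       ∀ g : V, inn g (C g) =
          2 * Complex.I * inn g (M g) - inn (M g) (B (M g))) :=
  exponent_matching_general hnd hAD Complex.I B C M
end
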